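/- Let B be a finite set and let (B'_i)_{i ∈ ι} be a nonempty finite family of pairwise distinct nonempty proper subsets of B that are pairwise disjoint (B'_i ∩ B'_j = ∅ for all i ≠ j). Give each B'_i the simple basic belief assignment with weight a_i = |B'_i|/|B|, let m be the Dempster combination over the frame B, and let Bel be its credibility function. Then the set of indices i maximizing Bel(B'_i) equals the set of indices i maximizing the cardinality |B'_i|. (Hence in this disjoint case the credibility-based revision operator CSRG selects exactly the same maximal consistent subbases as the cardinality-based operator RSRG, and they lead to the same revision result.) -/

import Mathlib

open Finset

/-- The intersection `⋂_{i ∈ S} B'_i` taken within the frame `Θ`, with the convention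
that the empty intersection (`S = ∅`) is the whole frame `Θ`. -/
def interS {α ι : Type*} [DecidableEq α] (Θ : Finset α) (B : ι → Finset α)
    (S : Finset ι) : Finset α :=
  Θ.filter (fun x => ∀ i ∈ S, x ∈ B i)

/-- The conjunctive weight `Π_{i ∈ S} a_i · Π_{i ∉ S} (1 − a_i)` of a subfamily `S` when
combining the simple BBAs with focal sets `B'_i` and weights `a_i`. -/
def weight {ι : Type*} [Fintype ι] [DecidableEq ι] (a : ι → ℝ) (S : Finset ι) : ℝ :=
  (∏ i ∈ S, a i) * ∏ i ∈ Finset.univ \ S, (1 - a i)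

/-- The total conflict `k` of the conjunctive combination of the simple BBAs with focal
sets `B'_i ⊆ Θ` and weights `a_i`: the total weight of the subfamilies with empty
intersection. -/
def totalConflict {α ι : Type*} [DecidableEq α] [Fintype ι] [DecidableEq ι]
    (Θ : Finset α) (B : ι → Finset α) (a : ι → ℝ) : ℝ :=
  ∑ S ∈ (Finset.univ : Finset ι).powerset,
    if interS Θ B S = ∅ then weight a S else 0

/-- The Dempster combination of the simple BBAs with focal sets `B'_i ⊆ Θ` and weights
`a_i`: `m(X) = (1−k)⁻¹ · Σ_{S : ⋂_{i ∈ S} B'_i = X} Π_{i ∈ S} a_i · Π_{i ∉ S} (1 − a_i)`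
for `X ≠ ∅`, and `m(∅) = 0`. -/
noncomputable def dempsterCombo {α ι : Type*} [DecidableEq α] [Fintype ι] [DecidableEq ι]
    (Θ : Finset α) (B : ι → Finset α) (a : ι → ℝ) (X : Finset α) : ℝ :=
  if X = ∅ then 0 else
    (1 - totalConflict Θ B a)⁻¹ *
      ∑ S ∈ (Finset.univ : Finset ι).powerset,
        if interS Θ B S = X then weight a S else 0

/-- The credibility (belief) function of a basic belief assignment `m`:
`Bel(A) = Σ_{X ⊆ A, X ≠ ∅} m(X)`. -/
noncomputable def credibility {α : Type*} [DecidableEq α] (m : Finset α → ℝ)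
    (A : Finset α) : ℝ :=
  ∑ X ∈ A.powerset.filter (fun X => X ≠ ∅), m X

/-!
A subfamily whose intersection is nonempty and contained in `B'_i` must be `{i}`: by disjointness
it has no member other than `i`, and it is not the empty subfamily, whose intersection is the
whole frame. Hence `Bel(B'_i) = (1 - k)⁻¹ a_i ∏_{j ≠ i} (1 - a_j)`, which is the odds
`a_i / (1 - a_i)` up to a positive factor independent of `i`. The odds increase with `a_i`, and
`a_i` is proportional to `|B'_i|`.
-/

section

variable {α ι : Type*} [DecidableEq α] {Θ : Finset α} {B : ι → Finset α} {i : ι}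

lemma mem_interS {S : Finset ι} {x : α} : x ∈ interS Θ B S ↔ x ∈ Θ ∧ ∀ j ∈ S, x ∈ B j :=
  mem_filter

lemma interS_empty (Θ : Finset α) (B : ι → Finset α) : interS Θ B ∅ = Θ := by
  simp [interS]

lemma interS_singleton (hi : B i ⊆ Θ) : interS Θ B {i} = B i := by
  ext x
  simpa [mem_interS] using @hi x

lemma nonempty_interS_and_subset_iff (hne : (B i).Nonempty) (hproper : B i ⊂ Θ)
    (hdisj : ∀ j ≠ i, Disjoint (B j) (B i)) (S : Finset ι) :
    (interS Θ B S).Nonempty ∧ interS Θ B S ⊆ B i ↔ S = {i} := by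
  constructor
  · rintro ⟨⟨x, hx⟩, hsub⟩
    have hS : S ≠ ∅ := by
      rintro rfl
      exact hproper.2 (interS_empty Θ B ▸ hsub)
    refine eq_singleton_iff_nonempty_unique_mem.2 ⟨nonempty_iff_ne_empty.2 hS, fun j hj => ?_⟩
    by_contra hji
    exact disjoint_left.1 (hdisj j hji) ((mem_interS.1 hx).2 j hj) (hsub hx)
  · rintro rfl
    rw [interS_singleton hproper.1]
    exact ⟨hne, Subset.rfl⟩

variable [Fintype ι] [DecidableEq ι] {a : ι → ℝ}

lemma sum_weight (a : ι → ℝ) : ∑ S, weight a S = 1 := by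
  simpa [weight] using (prod_add a (fun i => 1 - a i) univ).symm

lemma weight_nonneg (h0 : ∀ i, 0 ≤ a i) (h1 : ∀ i, a i ≤ 1) (S : Finset ι) : 0 ≤ weight a S :=
  mul_nonneg (prod_nonneg fun i _ => h0 i) (prod_nonneg fun i _ => sub_nonneg.2 (h1 i))

lemma weight_empty (a : ι → ℝ) : weight a ∅ = ∏ i, (1 - a i) := by
  simp [weight]

lemma weight_singleton (hi : a i ≠ 1) :
    weight a {i} = a i / (1 - a i) * ∏ j, (1 - a j) := by
  have hi' : 1 - a i ≠ 0 := sub_ne_zero.2 hi.symm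
  rw [weight, prod_singleton, sdiff_singleton_eq_erase,
    ← mul_prod_erase univ (fun j => 1 - a j) (mem_univ i), ← mul_assoc, div_mul_cancel₀ _ hi']

lemma div_one_sub_le_div_one_sub_iff {x y : ℝ} (hx : x < 1) (hy : y < 1) :
    x / (1 - x) ≤ y / (1 - y) ↔ x ≤ y := by
  rw [div_le_div_iff₀ (sub_pos.2 hx) (sub_pos.2 hy), mul_one_sub, mul_one_sub, mul_comm y x,
    sub_le_sub_iff_right]

lemma weight_singleton_le_weight_singleton_iff (h1 : ∀ i, a i < 1) (i j : ι) :
    weight a {i} ≤ weight a {j} ↔ a i ≤ a j := by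
  have hprod : 0 < ∏ l, (1 - a l) := prod_pos fun l _ => sub_pos.2 (h1 l)
  rw [weight_singleton (h1 i).ne, weight_singleton (h1 j).ne, mul_le_mul_iff_left₀ hprod,
    div_one_sub_le_div_one_sub_iff (h1 i) (h1 j)]

lemma one_sub_totalConflict (Θ : Finset α) (B : ι → Finset α) (a : ι → ℝ) :
    1 - totalConflict Θ B a = ∑ S with (interS Θ B S).Nonempty, weight a S := by
  simp only [totalConflict, powerset_univ, ← sum_filter, nonempty_iff_ne_empty]
  rw [sub_eq_iff_eq_add', sum_filter_add_sum_filter_not, sum_weight]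

lemma totalConflict_lt_one (hΘ : Θ.Nonempty) (B : ι → Finset α)
    (h0 : ∀ i, 0 ≤ a i) (h1 : ∀ i, a i < 1) : totalConflict Θ B a < 1 := by
  have hempty : 0 < weight a ∅ := by
    rw [weight_empty]
    exact prod_pos fun i _ => sub_pos.2 (h1 i)
  rw [← sub_pos, one_sub_totalConflict]
  exact sum_pos' (fun S _ => weight_nonneg h0 (fun i => (h1 i).le) S)
    ⟨∅, by simpa [interS_empty] using hΘ, hempty⟩

lemma credibility_dempsterCombo (Θ : Finset α) (B : ι → Finset α) (a : ι → ℝ) (A : Finset α) :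
    credibility (dempsterCombo Θ B a) A = (1 - totalConflict Θ B a)⁻¹ *
      ∑ S with (interS Θ B S).Nonempty ∧ interS Θ B S ⊆ A, weight a S := by
  have hmass : ∀ X ∈ A.powerset.filter (fun X => X ≠ ∅), dempsterCombo Θ B a X =
      (1 - totalConflict Θ B a)⁻¹ * ∑ S, if interS Θ B S = X then weight a S else 0 :=
    fun X hX => by rw [dempsterCombo, if_neg (mem_filter.1 hX).2, powerset_univ]
  rw [credibility, sum_congr rfl hmass, ← mul_sum, sum_comm]
  simp only [sum_ite_eq, mem_filter, mem_powerset, sum_filter, nonempty_iff_ne_empty, and_comm]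

lemma credibility_dempsterCombo_of_disjoint (a : ι → ℝ) (hne : (B i).Nonempty)
    (hproper : B i ⊂ Θ) (hdisj : ∀ j ≠ i, Disjoint (B j) (B i)) :
    credibility (dempsterCombo Θ B a) (B i) =
      (1 - totalConflict Θ B a)⁻¹ * weight a {i} := by
  simp only [credibility_dempsterCombo, nonempty_interS_and_subset_iff hne hproper hdisj,
    filter_eq', mem_univ, if_true, sum_singleton]

theorem credibility_dempsterCombo_le_iff_of_disjoint (hne : ∀ i, (B i).Nonempty)
    (hproper : ∀ i, B i ⊂ Θ) (hdisj : Pairwise fun i j => Disjoint (B i) (B j))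
    (h0 : ∀ i, 0 ≤ a i) (h1 : ∀ i, a i < 1) (i j : ι) :
    credibility (dempsterCombo Θ B a) (B i) ≤ credibility (dempsterCombo Θ B a) (B j) ↔
      a i ≤ a j := by
  have hk : 0 < (1 - totalConflict Θ B a)⁻¹ :=
    inv_pos.2 (sub_pos.2 (totalConflict_lt_one ((hne i).mono (hproper i).1) B h0 h1))
  have hBel (l : ι) := credibility_dempsterCombo_of_disjoint a (hne l) (hproper l)
    fun _ hl => hdisj hl
  rw [hBel, hBel, mul_le_mul_iff_right₀ hk, weight_singleton_le_weight_singleton_iff h1]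

end

/-- If the nonempty proper subbases `B'_i ⊊ B` are pairwise distinct and pairwise
disjoint, and each carries the simple BBA with weight `a_i = |B'_i|/|B|`, then for the
credibility function `Bel` of their Dempster combination, the indices maximizing
`Bel(B'_i)` are exactly the indices maximizing the cardinality `|B'_i|` (so CSRG and
RSRG select the same subbases and lead to the same revision result). -/
theorem argmax_credibility_eq_argmax_card_of_disjoint
    {α ι : Type*} [DecidableEq α] [Fintype ι] [DecidableEq ι] [Nonempty ι]
    (B : Finset α) (B' : ι → Finset α)
    (hne : ∀ i, (B' i).Nonempty) (hproper : ∀ i, B' i ⊂ B)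
    (hdistinct : ∀ i j, i ≠ j → B' i ≠ B' j)
    (hdisj : ∀ i j, i ≠ j → B' i ∩ B' j = ∅)
    (a : ι → ℝ) (ha : ∀ i, a i = ((B' i).card : ℝ) / (B.card : ℝ)) :
    {i : ι | ∀ j : ι, credibility (dempsterCombo B B' a) (B' j) ≤
        credibility (dempsterCombo B B' a) (B' i)} =
      {i : ι | ∀ j : ι, (B' j).card ≤ (B' i).card} := by
  have hcard : (0 : ℝ) < B.card := by
    exact_mod_cast card_pos.2 ((hne (Classical.arbitrary ι)).mono (hproper _).1)
  have h0 (i : ι) : 0 ≤ a i := by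
    rw [ha]
    positivity
  have h1 (i : ι) : a i < 1 := by
    rw [ha, div_lt_one hcard]
    exact_mod_cast card_lt_card (hproper i)
  have hpairwise : Pairwise fun i j => Disjoint (B' i) (B' j) :=
    fun i j hij => disjoint_iff_inter_eq_empty.2 (hdisj i j hij)
  ext i
  refine forall_congr' fun j => ?_
  rw [credibility_dempsterCombo_le_iff_of_disjoint hne hproper hpairwise h0 h1, ha, ha,
    div_le_div_iff_of_pos_right hcard, Nat.cast_le]
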